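/- arXiv:math/9802022 — 4 statements merged into one kernel-verified Lean document; each statement's English description precedes it below -/
import Mathlib

section
/- Let C ∈ ℂ with C ≠ 0, C ≠ 1 and C ≠ −1. Then the polynomial P(m, b) = b·m² − b − C·b²·m + C·m is irreducible in the polynomial ring ℂ[m, b] in two commuting variables m and b. -/
/-!
View `P` as the quadratic `b·m² + c(1 - b²)·m - b` in `m` over `A = ℂ[b]`. It is primitive because
`b` and `1 - b²` are coprime, so a nontrivial factorization is `(p m + q)(r m + s)` with
`p r = b`, `q s = -b` and `p s + q r = c(1 - b²)`. As `b` is prime, one may assume `b ∣ p`. Then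
`b ∤ q`, since otherwise `b ∣ c(1 - b²)`; hence `b ∣ s`. Writing `p = b u` and `s = b v`, the
elements `u, r, v, q` are constants with `u r = 1` and `v q = -1`, and
`u v b² + q r = c - c b²` forces `u v = -c` and `q r = c`, so `c² = -(u r)(v q) = 1`
(`no_linear_factors`).
-/

open MvPolynomial

/-- A quadratic `a X² + d X + e` over a domain, with `a` and `d` having only units as common
divisors (so that it is primitive), is irreducible if it is not a product of two linear
polynomials. -/
lemma irreducible_quadratic {A : Type*} [CommRing A] [IsDomain A] (a d e : A) (ha : a ≠ 0)
    (hprim : ∀ t, t ∣ a → t ∣ d → IsUnit t)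
    (hlin : ∀ p q r s : A, p * r = a → q * s = e → p * s + q * r = d → False) :
    Irreducible (Polynomial.C a * Polynomial.X ^ 2 + Polynomial.C d * Polynomial.X
      + Polynomial.C e) := by
  set P := Polynomial.C a * Polynomial.X ^ 2 + Polynomial.C d * Polynomial.X
      + Polynomial.C e with hP
  have hdeg : P.natDegree = 2 := Polynomial.natDegree_quadratic ha
  have hP0 : P ≠ 0 := fun h => by simp [h] at hdeg
  have c0 : P.coeff 0 = e := by simp [hP]
  have c1 : P.coeff 1 = d := by simp [hP, Polynomial.coeff_C]
  have c2 : P.coeff 2 = a := by simp [hP, Polynomial.coeff_C]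
  have hconst : ∀ f g : Polynomial A, P = f * g → f.natDegree = 0 → IsUnit f := by
    intro f g h hf
    obtain ⟨t, rfl⟩ := Polynomial.natDegree_eq_zero.mp hf
    refine Polynomial.isUnit_C.mpr (hprim t ?_ ?_)
    · exact ⟨g.coeff 2, by rw [← c2, h, Polynomial.coeff_C_mul]⟩
    · exact ⟨g.coeff 1, by rw [← c1, h, Polynomial.coeff_C_mul]⟩
  refine ⟨fun h => ?_, fun f g h => ?_⟩
  · have := Polynomial.natDegree_eq_zero_of_isUnit h
    omega
  · have hf0 : f ≠ 0 := by rintro rfl; simp at h; exact hP0 h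
    have hg0 : g ≠ 0 := by rintro rfl; simp at h; exact hP0 h
    have hs : f.natDegree + g.natDegree = 2 := by
      rw [← Polynomial.natDegree_mul hf0 hg0, ← h, hdeg]
    by_cases hf : f.natDegree = 0
    · exact Or.inl (hconst f g h hf)
    by_cases hg : g.natDegree = 0
    · exact Or.inr (hconst g f (by rw [h, mul_comm]) hg)
    exfalso
    obtain ⟨p, q, rfl⟩ := Polynomial.exists_eq_X_add_C_of_natDegree_le_one
      (show f.natDegree ≤ 1 by omega)
    obtain ⟨r, s, rfl⟩ := Polynomial.exists_eq_X_add_C_of_natDegree_le_one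
      (show g.natDegree ≤ 1 by omega)
    have key : P = Polynomial.C (p * r) * Polynomial.X ^ 2
        + Polynomial.C (p * s + q * r) * Polynomial.X + Polynomial.C (q * s) := by
      rw [h]; simp only [map_add, map_mul]; ring
    refine hlin p q r s ?_ ?_ ?_
    · rw [← c2, key]; simp [Polynomial.coeff_C, mul_assoc]
    · rw [← c0, key]; simp
    · rw [← c1, key]; simp [Polynomial.coeff_C, mul_assoc]

lemma not_X_dvd (c : ℂ) (hc0 : c ≠ 0) :
    ¬ (X 0 : MvPolynomial (Fin 1) ℂ) ∣ C c * (1 - X 0 ^ 2) := by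
  rintro ⟨t, ht⟩
  have := congrArg (MvPolynomial.eval (fun _ => (0 : ℂ))) ht
  simp at this
  exact hc0 this

/-- The coefficient equations of `(p m + q)(r m + s) = P` have no solution in `ℂ[b]` with
`b ∣ p`. -/
lemma no_linear_factors (c : ℂ) (hc0 : c ≠ 0) (hc1 : c ≠ 1) (hcm1 : c ≠ -1)
    (p q r s : MvPolynomial (Fin 1) ℂ) (h2 : p * r = X 0) (h0 : q * s = -X 0)
    (h1 : p * s + q * r = C c * (1 - X 0 ^ 2)) (hp : X 0 ∣ p) : False := by
  have hX : Prime (X 0 : MvPolynomial (Fin 1) ℂ) := MvPolynomial.X_prime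
  have hq : ¬ X 0 ∣ q := fun hq => not_X_dvd c hc0
    (h1 ▸ dvd_add (hp.mul_right s) (hq.mul_right r))
  have hs : X 0 ∣ s := (hX.dvd_or_dvd (show X 0 ∣ q * s by rw [h0]; simp)).resolve_left hq
  obtain ⟨u, rfl⟩ := hp
  obtain ⟨v, rfl⟩ := hs
  have hur : u * r = 1 := mul_left_cancel₀ hX.ne_zero (by linear_combination h2)
  have hqv : v * q = -1 := mul_left_cancel₀ hX.ne_zero (by linear_combination h0)
  have unit_const : ∀ w : MvPolynomial (Fin 1) ℂ, IsUnit w → ∃ z, w = C z := fun w hw => by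
    obtain ⟨z, _, hz⟩ := MvPolynomial.isUnit_iff_eq_C_of_isReduced.mp hw
    exact ⟨z, hz⟩
  obtain ⟨u, rfl⟩ := unit_const u (IsUnit.of_mul_eq_one _ hur)
  obtain ⟨r, rfl⟩ := unit_const r (IsUnit.of_mul_eq_one _ (mul_comm _ r ▸ hur))
  obtain ⟨v, rfl⟩ := unit_const v (IsUnit.of_mul_eq_one (-q) (by linear_combination -hqv))
  obtain ⟨q, rfl⟩ := unit_const q (IsUnit.of_mul_eq_one (-C v) (by linear_combination -hqv))
  -- Evaluating at `b = 0` and `b = 1` separates the two coefficients.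
  have e0 := congrArg (MvPolynomial.eval (fun _ => (0 : ℂ))) h1
  have e1 := congrArg (MvPolynomial.eval (fun _ => (1 : ℂ))) h1
  have e2 := congrArg (MvPolynomial.eval (fun _ => (0 : ℂ))) hur
  have e3 := congrArg (MvPolynomial.eval (fun _ => (0 : ℂ))) hqv
  simp at e0 e1 e2 e3
  have : (c - 1) * (c + 1) = 0 := by
    linear_combination (-c - q * r) * e0 + q * r * e1 - v * q * e2 - e3
  rcases mul_eq_zero.mp this with h | h
  · exact hc1 (sub_eq_zero.mp h)
  · exact hcm1 (eq_neg_of_add_eq_zero_left h)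

/-- For `C ≠ 0, ±1`, the polynomial `P(m,b) = b·m² − b − C·b²·m + C·m`
is irreducible in `ℂ[m,b]`.  Here `X 0` plays the role of `m` and `X 1`
plays the role of `b`. -/
theorem stmt_1 (c : ℂ) (hc0 : c ≠ 0) (hc1 : c ≠ 1) (hcm1 : c ≠ -1) :
    Irreducible
      (X 1 * X 0 ^ 2 - X 1 - MvPolynomial.C c * X 1 ^ 2 * X 0 + MvPolynomial.C c * X 0 :
        MvPolynomial (Fin 2) ℂ) := by
  have hX : Prime (X 0 : MvPolynomial (Fin 1) ℂ) := MvPolynomial.X_prime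
  rw [← MulEquiv.irreducible_iff (finSuccEquiv ℂ 1)]
  have h1 : finSuccEquiv ℂ 1 (X 1) = Polynomial.C (X 0) := finSuccEquiv_X_succ (j := 0)
  have hC : finSuccEquiv ℂ 1 (C c) = Polynomial.C (C c) := by simp [finSuccEquiv_apply]
  have hI := irreducible_quadratic (X 0 : MvPolynomial (Fin 1) ℂ) (C c * (1 - X 0 ^ 2)) (-X 0)
    hX.ne_zero ?_ ?_
  · convert hI using 1
    simp only [map_add, map_sub, map_mul, map_pow, map_neg, map_one, h1, hC, finSuccEquiv_X_zero]
    ring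
  · rintro t ⟨w, hw⟩ ht
    -- `b` is irreducible, so a non-unit divisor `t` of `b` is an associate of `b`.
    rcases hX.irreducible.isUnit_or_isUnit hw with h | h
    · exact h
    · exact absurd (((associated_mul_unit_left t w h).dvd_iff_dvd_left.mpr ht))
        (hw ▸ not_X_dvd c hc0)
  · intro p q r s h2 h0 h1
    rcases hX.dvd_or_dvd (show X 0 ∣ p * r by rw [h2]) with hp | hr
    · exact no_linear_factors c hc0 hc1 hcm1 p q r s h2 h0 h1 hp
    · exact no_linear_factors c hc0 hc1 hcm1 r s p q (by rw [mul_comm, h2]) (by rw [mul_comm, h0])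
        (by rw [← h1]; ring) hr
end

section
/- Let A, B ∈ SL(2,ℂ) with tr(A) = tr(B), tr(A) ≠ 2 and tr(A) ≠ −2, and suppose A and B have no common eigenvector (no nonzero v ∈ ℂ² is an eigenvector of both A and B). Then there are exactly two pairs (a, s) with a ∈ ℂ, a ≠ 0, and s ∈ ℂ, for which there exists P ∈ SL(2,ℂ) with P·A·P⁻¹ equal to the matrix with rows (a, 1) and (0, a⁻¹), and P·B·P⁻¹ equal to the matrix with rows (a, 0) and (s, a⁻¹). -/
open Matrix

/-!
The trace forces `a + a⁻¹ = tr A`, and `tr (A B) = a² + s + a⁻²` then determines `s` from `a`.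
So there is at most one pair for each root `a` of `X² - (tr A) X + 1`, and this polynomial has two
distinct roots `a₀, a₀⁻¹` because `tr A ≠ ±2`. Conversely each root `a` occurs
(`exists_conj_normalForm`): with `w` an eigenvector of `B` for `a⁻¹` and `v = (A - a⁻¹) w`,
Cayley–Hamilton gives `A v = a v`, while `v, w` are independent because `w` is not an eigenvector
of `A`. After a common rescaling of `v, w` to determinant one, conjugation to this basis puts
`A, B` in normal form.
-/

/-- An eigenvector of `B` for the eigenvalue `b`, when `b` is a root of its characteristic
polynomial. -/
lemma exists_eigenvector_of_root (B : Matrix (Fin 2) (Fin 2) ℂ) (hdet : B.det = 1) (b : ℂ)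
    (hb : b * b - B.trace * b + 1 = 0) :
    ∃ w : Fin 2 → ℂ, w ≠ 0 ∧ B.mulVec w = b • w := by
  have hd : (B - b • (1 : Matrix (Fin 2) (Fin 2) ℂ)).det = 0 := by
    rw [Matrix.det_fin_two] at hdet ⊢
    rw [Matrix.trace_fin_two] at hb
    simp
    linear_combination hb + hdet
  obtain ⟨w, hw, hBw⟩ := Matrix.exists_mulVec_eq_zero_iff.mpr hd
  refine ⟨w, hw, ?_⟩
  rw [Matrix.sub_mulVec, Matrix.smul_mulVec, Matrix.one_mulVec] at hBw
  exact sub_eq_zero.mp hBw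

/-- Every root `a` of the characteristic polynomial of `A` occurs in a normal form. -/
lemma exists_conj_normalForm (A B : Matrix.SpecialLinearGroup (Fin 2) ℂ)
    (htr : Matrix.trace (A : Matrix (Fin 2) (Fin 2) ℂ) =
      Matrix.trace (B : Matrix (Fin 2) (Fin 2) ℂ))
    (h : ¬ ∃ v : Fin 2 → ℂ, v ≠ 0 ∧
        (∃ a : ℂ, (A : Matrix (Fin 2) (Fin 2) ℂ).mulVec v = a • v) ∧
        (∃ b : ℂ, (B : Matrix (Fin 2) (Fin 2) ℂ).mulVec v = b • v))
    (a : ℂ) (ha : a ≠ 0) (hat : Matrix.trace (A : Matrix (Fin 2) (Fin 2) ℂ) = a + a⁻¹) :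
    ∃ (s : ℂ) (P : Matrix.SpecialLinearGroup (Fin 2) ℂ),
      ((P * A * P⁻¹ : Matrix.SpecialLinearGroup (Fin 2) ℂ) :
          Matrix (Fin 2) (Fin 2) ℂ) = !![a, 1; 0, a⁻¹] ∧
      ((P * B * P⁻¹ : Matrix.SpecialLinearGroup (Fin 2) ℂ) :
          Matrix (Fin 2) (Fin 2) ℂ) = !![a, 0; s, a⁻¹] := by
  obtain ⟨w, hw, hBw⟩ := exists_eigenvector_of_root B B.det_coe a⁻¹ (by
    rw [← htr, hat]; field_simp; ring)
  have hdA := A.det_coe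
  have hdB := B.det_coe
  rw [hat] at htr
  rw [Matrix.det_fin_two] at hdA hdB
  rw [Matrix.trace_fin_two] at htr hat
  have hB0 := congrFun hBw 0
  have hB1 := congrFun hBw 1
  simp only [Matrix.mulVec, dotProduct, Fin.sum_univ_two, Pi.smul_apply, smul_eq_mul] at hB0 hB1
  have hnA : ∀ k : ℂ, ¬ (A 0 0 * w 0 + A 0 1 * w 1 = k * w 0 ∧
      A 1 0 * w 0 + A 1 1 * w 1 = k * w 1) := by
    rintro k ⟨h0, h1⟩
    refine h ⟨w, hw, ⟨k, ?_⟩, ⟨a⁻¹, hBw⟩⟩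
    ext i
    fin_cases i
    · simpa [Matrix.mulVec, dotProduct, Fin.sum_univ_two] using h0
    · simpa [Matrix.mulVec, dotProduct, Fin.sum_univ_two] using h1
  have hab : a * a⁻¹ = 1 := mul_inv_cancel₀ ha
  generalize a⁻¹ = b at *
  obtain ⟨v0, hv0⟩ : ∃ x, x = A 0 0 * w 0 + A 0 1 * w 1 - b * w 0 := ⟨_, rfl⟩
  obtain ⟨v1, hv1⟩ : ∃ x, x = A 1 0 * w 0 + A 1 1 * w 1 - b * w 1 := ⟨_, rfl⟩
  have hd : v0 * w 1 - w 0 * v1 ≠ 0 := by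
    intro hd
    by_cases h0 : w 0 = 0
    · have h1 : w 1 ≠ 0 := by
        intro h1
        apply hw
        ext i
        fin_cases i <;> simp [h0, h1]
      apply hnA (b + v1 / w 1)
      constructor <;> field_simp <;> grind
    · apply hnA (b + v0 / w 0)
      constructor <;> field_simp <;> grind
  obtain ⟨m, hm⟩ := IsAlgClosed.exists_pow_nat_eq (v0 * w 1 - w 0 * v1)⁻¹ (n := 2) (by norm_num)
  have hmd : m ^ 2 * (v0 * w 1 - w 0 * v1) = 1 := by rw [hm]; exact inv_mul_cancel₀ hd
  let P : Matrix.SpecialLinearGroup (Fin 2) ℂ :=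
    ⟨!![m * w 1, -(m * w 0); -(m * v1), m * v0], by
      rw [Matrix.det_fin_two_of]; linear_combination hmd⟩
  have hAv0 : A 0 0 * v0 + A 0 1 * v1 = a * v0 := by grind
  have hAv1 : A 1 0 * v0 + A 1 1 * v1 = a * v1 := by grind
  refine ⟨m ^ 2 * (v0 * (B 1 0 * v0 + B 1 1 * v1) - v1 * (B 0 0 * v0 + B 0 1 * v1)), P, ?_, ?_⟩
  · rw [Matrix.SpecialLinearGroup.coe_mul, Matrix.SpecialLinearGroup.coe_mul,
      Matrix.SpecialLinearGroup.coe_inv, Matrix.adjugate_fin_two]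
    ext i j
    fin_cases i <;> fin_cases j <;>
      simp [P, Matrix.mul_apply, Matrix.vecMul, dotProduct, Fin.sum_univ_two]
    · linear_combination m^2 * w 1 * hAv0 - m^2 * w 0 * hAv1 + a * hmd
    · linear_combination -m^2 * w 1 * hv0 + m^2 * w 0 * hv1 + hmd
    · linear_combination -m^2 * v1 * hAv0 + m^2 * v0 * hAv1
    · linear_combination m^2 * v1 * hv0 - m^2 * v0 * hv1 + b * hmd
  · rw [Matrix.SpecialLinearGroup.coe_mul, Matrix.SpecialLinearGroup.coe_mul,
      Matrix.SpecialLinearGroup.coe_inv, Matrix.adjugate_fin_two]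
    ext i j
    fin_cases i <;> fin_cases j <;>
      simp [P, Matrix.mul_apply, Matrix.vecMul, dotProduct, Fin.sum_univ_two]
    -- The upper left entry is the trace minus the lower right entry.
    · linear_combination m^2 * v1 * hB0 - m^2 * v0 * hB1 - b * hmd
        + (B 0 0 + B 1 1) * hmd - htr
    · linear_combination m^2 * w 1 * hB0 - m^2 * w 0 * hB1
    · ring
    · linear_combination -m^2 * v1 * hB0 + m^2 * v0 * hB1 + b * hmd

lemma trace_conj_coe (P X : Matrix.SpecialLinearGroup (Fin 2) ℂ) :
    Matrix.trace ((P * X * P⁻¹ : Matrix.SpecialLinearGroup (Fin 2) ℂ) :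
      Matrix (Fin 2) (Fin 2) ℂ) = Matrix.trace (X : Matrix (Fin 2) (Fin 2) ℂ) := by
  rw [Matrix.SpecialLinearGroup.coe_mul, Matrix.trace_mul_comm,
    ← Matrix.SpecialLinearGroup.coe_mul]
  rw [show P⁻¹ * (P * X) = X by group]

/-- A normal form `(a, s)` satisfies `a + a⁻¹ = tr A` and `a² + s + a⁻² = tr (A B)`. -/
lemma traces_of_normalForm (A B P : Matrix.SpecialLinearGroup (Fin 2) ℂ) (a s : ℂ)
    (hA : ((P * A * P⁻¹ : Matrix.SpecialLinearGroup (Fin 2) ℂ) :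
        Matrix (Fin 2) (Fin 2) ℂ) = !![a, 1; 0, a⁻¹])
    (hB : ((P * B * P⁻¹ : Matrix.SpecialLinearGroup (Fin 2) ℂ) :
        Matrix (Fin 2) (Fin 2) ℂ) = !![a, 0; s, a⁻¹]) :
    Matrix.trace (A : Matrix (Fin 2) (Fin 2) ℂ) = a + a⁻¹ ∧
    s = Matrix.trace ((A * B : Matrix.SpecialLinearGroup (Fin 2) ℂ) :
      Matrix (Fin 2) (Fin 2) ℂ) - (a * a + a⁻¹ * a⁻¹) := by
  constructor
  · rw [← trace_conj_coe P A, hA, Matrix.trace_fin_two_of]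
  · have hc : P * (A * B) * P⁻¹ = (P * A * P⁻¹) * (P * B * P⁻¹) := by group
    rw [← trace_conj_coe P (A * B), hc, Matrix.SpecialLinearGroup.coe_mul, hA, hB]
    simp [Matrix.trace_fin_two]

/-- If `A, B ∈ SL(2,ℂ)` have equal traces `≠ ±2` and no common eigenvector,
then there are exactly two pairs `(a, s)` with `a ≠ 0` such that some
`P ∈ SL(2,ℂ)` conjugates `A` to `[[a,1],[0,a⁻¹]]` and `B` to `[[a,0],[s,a⁻¹]]`. -/
theorem stmt_4 (A B : Matrix.SpecialLinearGroup (Fin 2) ℂ)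
    (htr : Matrix.trace (A : Matrix (Fin 2) (Fin 2) ℂ) =
      Matrix.trace (B : Matrix (Fin 2) (Fin 2) ℂ))
    (htr2 : Matrix.trace (A : Matrix (Fin 2) (Fin 2) ℂ) ≠ 2)
    (htrm2 : Matrix.trace (A : Matrix (Fin 2) (Fin 2) ℂ) ≠ -2)
    (h : ¬ ∃ v : Fin 2 → ℂ, v ≠ 0 ∧
        (∃ a : ℂ, (A : Matrix (Fin 2) (Fin 2) ℂ).mulVec v = a • v) ∧
        (∃ b : ℂ, (B : Matrix (Fin 2) (Fin 2) ℂ).mulVec v = b • v)) :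
    Set.ncard {p : ℂ × ℂ | p.1 ≠ 0 ∧
        ∃ P : Matrix.SpecialLinearGroup (Fin 2) ℂ,
          ((P * A * P⁻¹ : Matrix.SpecialLinearGroup (Fin 2) ℂ) :
              Matrix (Fin 2) (Fin 2) ℂ) = !![p.1, 1; 0, p.1⁻¹] ∧
          ((P * B * P⁻¹ : Matrix.SpecialLinearGroup (Fin 2) ℂ) :
              Matrix (Fin 2) (Fin 2) ℂ) = !![p.1, 0; p.2, p.1⁻¹]} = 2 := by
  obtain ⟨a, hroot⟩ : ∃ a : ℂ, a * a - Matrix.trace (A : Matrix (Fin 2) (Fin 2) ℂ) * a + 1 = 0 := by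
    obtain ⟨d, hd⟩ := IsAlgClosed.exists_pow_nat_eq
      (Matrix.trace (A : Matrix (Fin 2) (Fin 2) ℂ) ^ 2 - 4) (n := 2) (by norm_num)
    refine ⟨(Matrix.trace (A : Matrix (Fin 2) (Fin 2) ℂ) + d) / 2, ?_⟩
    linear_combination hd / 4
  have ha : a ≠ 0 := by
    rintro rfl
    simp at hroot
  have hat : Matrix.trace (A : Matrix (Fin 2) (Fin 2) ℂ) = a + a⁻¹ := by
    field_simp
    linear_combination -hroot
  have hne : a ≠ a⁻¹ := by
    intro he
    have h1 : a * a = 1 := by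
      nth_rewrite 2 [he]
      exact mul_inv_cancel₀ ha
    rcases mul_self_eq_one_iff.mp h1 with rfl | rfl
    · exact htr2 (by rw [hat]; norm_num)
    · exact htrm2 (by rw [hat]; norm_num)
  obtain ⟨s, P, hPA, hPB⟩ := exists_conj_normalForm A B htr h a ha hat
  obtain ⟨s', P', hPA', hPB'⟩ := exists_conj_normalForm A B htr h a⁻¹ (inv_ne_zero ha)
    (by rw [hat, inv_inv, add_comm])
  have hs := (traces_of_normalForm A B P a s hPA hPB).2
  have hs' := (traces_of_normalForm A B P' a⁻¹ s' hPA' hPB').2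
  rw [Set.ncard_eq_two]
  refine ⟨(a, s), (a⁻¹, s'), fun he => hne (congrArg Prod.fst he), ?_⟩
  ext ⟨c, u⟩
  simp only [Set.mem_ofPred_eq, Set.mem_insert_iff, Set.mem_singleton_iff, Prod.mk.injEq]
  constructor
  · rintro ⟨hc, R, hRA, hRB⟩
    obtain ⟨h1, h2⟩ := traces_of_normalForm A B R c u hRA hRB
    have h3 : (c - a) * (c - a⁻¹) = 0 := by
      have hca : c + c⁻¹ = a + a⁻¹ := h1.symm.trans hat
      linear_combination c * hca - mul_inv_cancel₀ hc + mul_inv_cancel₀ ha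
    rcases mul_eq_zero.mp h3 with h4 | h4
    · obtain rfl := sub_eq_zero.mp h4
      exact Or.inl ⟨rfl, h2.trans hs.symm⟩
    · obtain rfl := sub_eq_zero.mp h4
      exact Or.inr ⟨rfl, h2.trans hs'.symm⟩
  · rintro (⟨rfl, rfl⟩ | ⟨rfl, rfl⟩)
    · exact ⟨ha, P, hPA, hPB⟩
    · exact ⟨inv_ne_zero ha, P', hPA', hPB'⟩
end

section
/- Let A, B ∈ SL(2,ℂ) be such that tr(A) ≠ 2 and tr(A) ≠ −2, B has an eigenvalue of modulus different from 1, and A and B have no common eigenvector (no nonzero v ∈ ℂ² is an eigenvector of both A and B). Then there exists N such that for every integer n ≥ N, the matrices A and Bⁿ·A·B⁻ⁿ have no common eigenvector. -/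
/-!
For a `2 × 2` matrix `A`, a nonzero `v` is an eigenvector exactly when the quadratic form
`Q(v) = det (v | A v)` vanishes. Since `B` has an eigenvalue of modulus `≠ 1` and determinant `1`,
it has a basis of eigenvectors `e₁, e₂` with eigenvalues `b, b⁻¹` and `‖b‖ > 1`. No `eᵢ` is an
eigenvector of `A`, so `Q(e₁), Q(e₂) ≠ 0`.

If `v` is a common eigenvector of `A` and `Bⁿ A B⁻ⁿ`, then `w = B⁻ⁿ v = x e₁ + y e₂` and
`v = bⁿ x e₁ + b⁻ⁿ y e₂` are both zeros of `Q`. Eliminating `x, y` from these two equations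
leaves `β M² = (1 + β)² Q(e₁) Q(e₂)` for `β = b²ⁿ`, where `M` is the cross coefficient of `Q`
(`coeff_relation`). This bounds `‖β‖` independently of `n` (`norm_bound`), whereas `‖β‖ → ∞`.
-/

open Matrix

/-- The quadratic form `v ↦ det (v | A v)`, whose nonzero zeros are the eigenvectors of `A`. -/
def eigForm (A : Matrix (Fin 2) (Fin 2) ℂ) (v : Fin 2 → ℂ) : ℂ :=
  v 0 * (A.mulVec v) 1 - v 1 * (A.mulVec v) 0

/-- The cross coefficient of `eigForm A`, i.e. its polar form at `(u, v)`. -/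
def eigCross (A : Matrix (Fin 2) (Fin 2) ℂ) (u v : Fin 2 → ℂ) : ℂ :=
  u 0 * (A.mulVec v) 1 - u 1 * (A.mulVec v) 0 + (v 0 * (A.mulVec u) 1 - v 1 * (A.mulVec u) 0)

lemma eigForm_eq_zero_of_eigen {A : Matrix (Fin 2) (Fin 2) ℂ} {v : Fin 2 → ℂ} {a : ℂ}
    (h : A.mulVec v = a • v) : eigForm A v = 0 := by
  simp only [eigForm, h, Pi.smul_apply, smul_eq_mul]
  ring

lemma exists_eigen_of_eigForm_eq_zero {A : Matrix (Fin 2) (Fin 2) ℂ} {v : Fin 2 → ℂ}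
    (hv : v ≠ 0) (h : eigForm A v = 0) : ∃ a : ℂ, A.mulVec v = a • v := by
  unfold eigForm at h
  by_cases h0 : v 0 = 0
  · have h1 : v 1 ≠ 0 := by
      intro h1
      apply hv
      ext i
      fin_cases i <;> simp [h0, h1]
    refine ⟨(A.mulVec v) 1 / v 1, ?_⟩
    ext i
    fin_cases i
    · have : (A.mulVec v) 0 = 0 := by simpa [h0, h1] using h
      simp [h0, this]
    · simp [h1]
  · refine ⟨(A.mulVec v) 0 / v 0, ?_⟩
    ext i
    fin_cases i
    · simp [h0]
    · simp only [Fin.mk_one, Pi.smul_apply, smul_eq_mul]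
      field_simp
      linear_combination h

lemma eigForm_comb (A : Matrix (Fin 2) (Fin 2) ℂ) (u v : Fin 2 → ℂ) (x y : ℂ) :
    eigForm A (x • u + y • v) =
      x ^ 2 * eigForm A u + x * y * eigCross A u v + y ^ 2 * eigForm A v := by
  simp only [eigForm, eigCross, mulVec_add, mulVec_smul, Pi.add_apply, Pi.smul_apply, smul_eq_mul]
  ring

/-- From one eigenvector with eigenvalue `b`, the relation `b² - tr(B) b + 1 = 0` shows that `b⁻¹`
is an eigenvalue too. -/
lemma exists_inv_eigen (B : SpecialLinearGroup (Fin 2) ℂ) {v : Fin 2 → ℂ} (hv : v ≠ 0) {b : ℂ}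
    (h : (B : Matrix (Fin 2) (Fin 2) ℂ).mulVec v = b • v) :
    b ≠ 0 ∧ ∃ w : Fin 2 → ℂ, w ≠ 0 ∧ (B : Matrix (Fin 2) (Fin 2) ℂ).mulVec w = b⁻¹ • w := by
  obtain ⟨B, hB⟩ := B
  simp only at h ⊢
  have hb : (B - scalar (Fin 2) b).det = 0 := by
    refine exists_mulVec_eq_zero_iff.mp ⟨v, hv, ?_⟩
    rw [sub_mulVec, h]
    simp
  rw [det_fin_two] at hB hb
  simp only [Matrix.sub_apply, scalar_apply, diagonal_apply] at hb
  simp at hb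
  have hb0 : b ≠ 0 := by
    rintro rfl
    apply one_ne_zero (α := ℂ)
    linear_combination hb - hB
  refine ⟨hb0, ?_⟩
  have hd : (B - scalar (Fin 2) b⁻¹).det = 0 := by
    rw [det_fin_two]
    simp only [Matrix.sub_apply, scalar_apply, diagonal_apply]
    simp
    field_simp
    linear_combination hb + (b ^ 2 - 1) * hB
  obtain ⟨w, hw, hw'⟩ := exists_mulVec_eq_zero_iff.mpr hd
  refine ⟨w, hw, ?_⟩
  rw [sub_mulVec, sub_eq_zero] at hw'
  rw [hw']
  simp

lemma exists_expanding_pair (B : SpecialLinearGroup (Fin 2) ℂ)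
    (hB : ∃ v : Fin 2 → ℂ, v ≠ 0 ∧ ∃ b : ℂ,
        (B : Matrix (Fin 2) (Fin 2) ℂ).mulVec v = b • v ∧ ‖b‖ ≠ 1) :
    ∃ (b : ℂ) (e₁ e₂ : Fin 2 → ℂ), 1 < ‖b‖ ∧ e₁ ≠ 0 ∧ e₂ ≠ 0 ∧
      (B : Matrix (Fin 2) (Fin 2) ℂ).mulVec e₁ = b • e₁ ∧
      (B : Matrix (Fin 2) (Fin 2) ℂ).mulVec e₂ = b⁻¹ • e₂ := by
  obtain ⟨v, hv, b, hb, hn⟩ := hB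
  obtain ⟨hb0, w, hw, hw'⟩ := exists_inv_eigen B hv hb
  rcases lt_or_gt_of_ne hn with h | h
  · refine ⟨b⁻¹, w, v, ?_, hw, hv, hw', by simpa using hb⟩
    rw [norm_inv]
    exact (one_lt_inv₀ (norm_pos_iff.mpr hb0)).mpr h
  · exact ⟨b, v, w, h, hv, hw, hb, hw'⟩

/-- Eigenvectors for distinct eigenvalues span `ℂ²`. -/
lemma exists_coords {B : Matrix (Fin 2) (Fin 2) ℂ} {b c : ℂ} (hbc : b ≠ c) {e₁ e₂ : Fin 2 → ℂ}
    (h₁ : e₁ ≠ 0) (h₂ : e₂ ≠ 0) (hB₁ : B.mulVec e₁ = b • e₁) (hB₂ : B.mulVec e₂ = c • e₂)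
    (w : Fin 2 → ℂ) : ∃ x y : ℂ, w = x • e₁ + y • e₂ := by
  have hD : e₁ 0 * e₂ 1 - e₁ 1 * e₂ 0 ≠ 0 := by
    intro hD
    -- If `e₁, e₂` were dependent, `b ≠ c` would force every product `e₁ i * e₂ j` to vanish.
    have a0 := congrFun hB₁ 0
    have a1 := congrFun hB₁ 1
    have c0 := congrFun hB₂ 0
    have c1 := congrFun hB₂ 1
    simp only [mulVec, dotProduct, Fin.sum_univ_two, Pi.smul_apply, smul_eq_mul] at a0 a1 c0 c1
    have hs : b - c ≠ 0 := sub_ne_zero.mpr hbc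
    have k0 : e₁ 0 * e₂ 0 = 0 := by
      apply mul_left_cancel₀ hs
      linear_combination e₁ 0 * c0 - e₂ 0 * a0 - B 0 1 * hD
    have k1 : e₁ 1 * e₂ 1 = 0 := by
      apply mul_left_cancel₀ hs
      linear_combination e₁ 1 * c1 - e₂ 1 * a1 + B 1 0 * hD
    have k2 : e₁ 0 * e₂ 1 = 0 := by
      apply mul_left_cancel₀ hs
      linear_combination e₁ 0 * c1 - e₂ 0 * a1 + (b - B 1 1) * hD
    have k3 : e₁ 1 * e₂ 0 = 0 := by linear_combination k2 - hD
    apply h₂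
    by_cases z : e₁ 0 = 0
    · have z1 : e₁ 1 ≠ 0 := by
        intro z1
        apply h₁
        ext i
        fin_cases i <;> simp [z, z1]
      ext i
      fin_cases i
      · simpa [z1] using k3
      · simpa [z1] using k1
    · ext i
      fin_cases i
      · simpa [z] using k0
      · simpa [z] using k2
  -- Cramer's rule.
  refine ⟨(w 0 * e₂ 1 - w 1 * e₂ 0) / (e₁ 0 * e₂ 1 - e₁ 1 * e₂ 0),
    (e₁ 0 * w 1 - e₁ 1 * w 0) / (e₁ 0 * e₂ 1 - e₁ 1 * e₂ 0), ?_⟩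
  ext i
  fin_cases i
  · simp only [Fin.zero_eta, Pi.add_apply, Pi.smul_apply, smul_eq_mul]
    rw [div_mul_eq_mul_div, div_mul_eq_mul_div, ← add_div, eq_div_iff hD]
    ring
  · simp only [Fin.mk_one, Pi.add_apply, Pi.smul_apply, smul_eq_mul]
    rw [div_mul_eq_mul_div, div_mul_eq_mul_div, ← add_div, eq_div_iff hD]
    ring

lemma pow_mulVec_eigen {B : Matrix (Fin 2) (Fin 2) ℂ} {b : ℂ} {e : Fin 2 → ℂ}
    (h : B.mulVec e = b • e) (n : ℕ) : (B ^ n).mulVec e = b ^ n • e := by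
  induction n with
  | zero => simp
  | succ k ih => rw [pow_succ, ← mulVec_mulVec, h, mulVec_smul, ih, smul_smul, pow_succ']

/-- Elimination of `x, y` from `Q(x, y) = 0` and `Q(t x, t⁻¹ y) = 0`, where
`Q(x, y) = P x² + M x y + R y²`. -/
lemma coeff_relation {P M R x y t : ℂ} (hP : P ≠ 0) (hR : R ≠ 0) (ht : t ≠ 0) (ht1 : t ^ 2 ≠ 1)
    (hxy : ¬ (x = 0 ∧ y = 0)) (h₁ : x ^ 2 * P + x * y * M + y ^ 2 * R = 0)
    (h₂ : (t * x) ^ 2 * P + (t * x) * (t⁻¹ * y) * M + (t⁻¹ * y) ^ 2 * R = 0) :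
    t ^ 2 * M ^ 2 = (1 + t ^ 2) ^ 2 * (P * R) := by
  have hx : x ≠ 0 := by
    rintro rfl
    apply hxy
    simpa [hR] using h₁
  have h₂' : t ^ 4 * x ^ 2 * P + t ^ 2 * (x * y * M) + y ^ 2 * R = 0 := by
    field_simp at h₂
    linear_combination h₂
  have h₃ : t ^ 2 * x ^ 2 * P = y ^ 2 * R := by
    have : (t ^ 2 - 1) * (t ^ 2 * x ^ 2 * P - y ^ 2 * R) = 0 := by
      linear_combination h₂' - t ^ 2 * h₁
    rcases mul_eq_zero.mp this with h | h
    · exact absurd (sub_eq_zero.mp h) ht1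
    · exact sub_eq_zero.mp h
  have h₄ : y * M = -(1 + t ^ 2) * x * P := by
    apply mul_left_cancel₀ hx
    linear_combination h₁ + h₃
  apply mul_left_cancel₀ (mul_ne_zero (pow_ne_zero 2 hx) hP)
  linear_combination M ^ 2 * h₃ + R * (y * M - (1 + t ^ 2) * x * P) * h₄

lemma norm_bound {β M S : ℂ} (hS : S ≠ 0) (hβ : β ≠ 0) (h : β * M ^ 2 = (1 + β) ^ 2 * S) :
    ‖β‖ ≤ ‖M ^ 2 / S‖ + 3 := by
  have e : β = M ^ 2 / S - 2 - β⁻¹ := by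
    field_simp
    linear_combination -h
  by_cases h1 : ‖β‖ ≤ 1
  · linarith [norm_nonneg (M ^ 2 / S)]
  · have hi : ‖β⁻¹‖ ≤ 1 := by
      rw [norm_inv]
      exact inv_le_one_of_one_le₀ (not_le.mp h1).le
    calc ‖β‖ = ‖M ^ 2 / S - 2 - β⁻¹‖ := by rw [← e]
      _ ≤ ‖M ^ 2 / S‖ + ‖(2 : ℂ)‖ + ‖β⁻¹‖ :=
        (norm_sub_le _ _).trans (add_le_add_left (norm_sub_le _ _) _)
      _ ≤ ‖M ^ 2 / S‖ + 3 := by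
        rw [Complex.norm_ofNat]
        linarith

/-- If `A, B ∈ SL(2,ℂ)` have no common eigenvector, `tr A ≠ ±2`, and `B` has an
eigenvalue of modulus `≠ 1`, then for all large `n` the matrices `A` and
`Bⁿ·A·B⁻ⁿ` have no common eigenvector. -/
theorem stmt_5 (A B : Matrix.SpecialLinearGroup (Fin 2) ℂ)
    (htr2 : Matrix.trace (A : Matrix (Fin 2) (Fin 2) ℂ) ≠ 2)
    (htrm2 : Matrix.trace (A : Matrix (Fin 2) (Fin 2) ℂ) ≠ -2)
    (hB : ∃ v : Fin 2 → ℂ, v ≠ 0 ∧ ∃ b : ℂ,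
        (B : Matrix (Fin 2) (Fin 2) ℂ).mulVec v = b • v ∧ ‖b‖ ≠ 1)
    (h : ¬ ∃ v : Fin 2 → ℂ, v ≠ 0 ∧
        (∃ a : ℂ, (A : Matrix (Fin 2) (Fin 2) ℂ).mulVec v = a • v) ∧
        (∃ b : ℂ, (B : Matrix (Fin 2) (Fin 2) ℂ).mulVec v = b • v)) :
    ∃ N : ℕ, ∀ n : ℕ, N ≤ n →
      ¬ ∃ v : Fin 2 → ℂ, v ≠ 0 ∧
          (∃ a : ℂ, (A : Matrix (Fin 2) (Fin 2) ℂ).mulVec v = a • v) ∧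
          (∃ c : ℂ, ((B ^ n * A * (B ^ n)⁻¹ : Matrix.SpecialLinearGroup (Fin 2) ℂ) :
              Matrix (Fin 2) (Fin 2) ℂ).mulVec v = c • v) := by
  obtain ⟨b, e₁, e₂, hb, he₁, he₂, hB₁, hB₂⟩ := exists_expanding_pair B hB
  have hb0 : b ≠ 0 := norm_pos_iff.mp (by linarith)
  have hbb : b ≠ b⁻¹ := by
    intro e
    have := congrArg norm e
    rw [norm_inv] at this
    linarith [inv_lt_one_of_one_lt₀ hb]
  have hP : eigForm A e₁ ≠ 0 := fun h0 =>
    h ⟨e₁, he₁, exists_eigen_of_eigForm_eq_zero he₁ h0, b, hB₁⟩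
  have hR : eigForm A e₂ ≠ 0 := fun h0 =>
    h ⟨e₂, he₂, exists_eigen_of_eigForm_eq_zero he₂ h0, b⁻¹, hB₂⟩
  set C : ℝ := ‖eigCross A e₁ e₂ ^ 2 / (eigForm A e₁ * eigForm A e₂)‖ + 3 with hC
  have hC1 : 1 < C := by
    have := norm_nonneg (eigCross A e₁ e₂ ^ 2 / (eigForm A e₁ * eigForm A e₂))
    linarith
  obtain ⟨N, hN⟩ := pow_unbounded_of_one_lt C hb
  refine ⟨N, fun n hn => ?_⟩
  rintro ⟨v, hv, ⟨a, ha⟩, c, hc⟩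
  have hbig : C < ‖(b ^ n) ^ 2‖ := by
    have h1 : C < ‖b‖ ^ n := hN.trans_le (pow_le_pow_right₀ hb.le hn)
    rw [norm_pow, norm_pow]
    nlinarith
  -- `w = B⁻ⁿ v` is an eigenvector of `A` for the eigenvalue `c`.
  set w : Fin 2 → ℂ := (((B ^ n)⁻¹ : SpecialLinearGroup (Fin 2) ℂ) :
    Matrix (Fin 2) (Fin 2) ℂ).mulVec v with hw
  have hvw : v = ((B : Matrix (Fin 2) (Fin 2) ℂ) ^ n).mulVec w := by
    rw [hw, ← Matrix.SpecialLinearGroup.coe_pow, mulVec_mulVec,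
      ← Matrix.SpecialLinearGroup.coe_mul, mul_inv_cancel, Matrix.SpecialLinearGroup.coe_one,
      one_mulVec]
  have hAw : (A : Matrix (Fin 2) (Fin 2) ℂ).mulVec w = c • w := by
    rw [hw, ← mulVec_smul, ← hc, mulVec_mulVec, mulVec_mulVec,
      ← Matrix.SpecialLinearGroup.coe_mul, ← Matrix.SpecialLinearGroup.coe_mul,
      mul_assoc (B ^ n), inv_mul_cancel_left]
  obtain ⟨x, y, hxy⟩ := exists_coords hbb he₁ he₂ hB₁ hB₂ w
  have hv' : v = (b ^ n * x) • e₁ + ((b ^ n)⁻¹ * y) • e₂ := by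
    rw [hvw, hxy, mulVec_add, mulVec_smul, mulVec_smul, pow_mulVec_eigen hB₁,
      pow_mulVec_eigen hB₂, smul_smul, smul_smul, inv_pow, mul_comm x, mul_comm y]
  have hQw := eigForm_eq_zero_of_eigen hAw
  have hQv := eigForm_eq_zero_of_eigen ha
  rw [hxy, eigForm_comb] at hQw
  rw [hv', eigForm_comb] at hQv
  have hxy0 : ¬ (x = 0 ∧ y = 0) := by
    rintro ⟨rfl, rfl⟩
    apply hv
    rw [hv']
    simp
  have ht1 : (b ^ n) ^ 2 ≠ 1 := by
    intro e
    rw [e, norm_one] at hbig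
    linarith
  have rel := coeff_relation hP hR (pow_ne_zero n hb0) ht1 hxy0 hQw hQv
  have := norm_bound (mul_ne_zero hP hR) (pow_ne_zero 2 (pow_ne_zero n hb0)) rel
  linarith
end

section
/- Let S be a dense additive subgroup of ℂ, let f : ℂ → ℂ be measurable, and let h : ℂ → ℂ be a function such that for Lebesgue-almost every z ∈ ℂ, the identity f(z + s) = f(z) + h(z)·s holds for all s ∈ S. Then there exist constants c, h₀ ∈ ℂ such that f(z) = c + h₀·z for Lebesgue-almost every z ∈ ℂ. -/
open MeasureTheory

/-!
Translations by a dense subgroup `S` of `ℂ` act ergodically on Lebesgue measure: translation is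
continuous in measure, so the translations preserving a measurable set up to a null set form a
closed set, and the action of the whole group `ℂ` on itself is ergodic. Hence a measurable function
that is a.e. invariant under each `s ∈ S` is a.e. constant (`ae_const_of_dense_translation`).

Fix a nonzero `s ∈ S`. The measurable function `z ↦ (f (z + s) - f z) / s` agrees a.e. with `h`.
Evaluating it at `z + t` for `t ∈ S`, with the relation at `z` applied to `t` and to `t + s`, shows
that it is a.e. invariant under `S`, so it is a.e. equal to a constant `h₀`. Then `z ↦ f z - h₀ * z`
is a.e. invariant under `S`, hence a.e. constant.
-/

/-- The translations that preserve a measurable set `A` up to null sets form a closed set; the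
measure of `A` may be infinite, so the argument truncates `A` to balls. -/
lemma preimage_add_ae_eq_of_dense {S : Set ℂ} (hS : Dense S) {A : Set ℂ}
    (hA : MeasurableSet A) (h : ∀ t ∈ S, (fun z : ℂ => t + z) ⁻¹' A =ᵐ[volume] A) (t₀ : ℂ) :
    (fun z : ℂ => t₀ + z) ⁻¹' A =ᵐ[volume] A := by
  rw [← measure_symmDiff_eq_zero_iff]
  have hcover : symmDiff ((fun z : ℂ => t₀ + z) ⁻¹' A) A ⊆
      ⋃ n : ℕ, symmDiff ((fun z : ℂ => t₀ + z) ⁻¹' A) A ∩ Metric.ball 0 n := by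
    rw [← Set.inter_iUnion, Metric.iUnion_ball_nat, Set.inter_univ]
  refine measure_mono_null hcover (measure_iUnion_null fun n => ?_)
  -- For `t` within distance `1` of `t₀`, this ball contains the translate by `t` of `ball 0 n`.
  set B : Set ℂ := A ∩ Metric.ball 0 (n + ‖t₀‖ + 1) with hB
  let F : C(ℂ × ℂ, ℂ) := ⟨fun p => p.1 + p.2, by fun_prop⟩
  have hlim := tendsto_measure_symmDiff_preimage_nhds_zero (μ := (volume : Measure ℂ))
    (ν := (volume : Measure ℂ)) (l := nhdsWithin t₀ S) (f := F.curry) (g := F.curry t₀) (s := B)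
    (F.curry.continuous.continuousAt.mono_left nhdsWithin_le_nhds)
    (Filter.Eventually.of_forall fun t => measurePreserving_add_left volume t)
    (measurePreserving_add_left volume t₀)
    (hA.inter measurableSet_ball).nullMeasurableSet
    ((measure_mono Set.inter_subset_right).trans_lt measure_ball_lt_top).ne
  have : (nhdsWithin t₀ S).NeBot := mem_closure_iff_nhdsWithin_neBot.1 (hS t₀)
  refine le_antisymm (ge_of_tendsto hlim ?_) zero_le
  filter_upwards [self_mem_nhdsWithin,
    mem_nhdsWithin_of_mem_nhds (Metric.ball_mem_nhds t₀ one_pos)] with t htS ht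
  refine measure_mono_ae ?_
  filter_upwards [(h t htS).mem_iff] with z hz hmem
  obtain ⟨hzs, hzn⟩ := hmem
  have hzn' : ‖z‖ < n := by simpa using hzn
  have ht' : ‖t - t₀‖ < 1 := by simpa [dist_eq_norm] using ht
  have htn : ‖t‖ < ‖t₀‖ + 1 := by
    have := norm_add_le (t - t₀) t₀
    rw [sub_add_cancel] at this
    linarith
  have h1 : t + z ∈ Metric.ball (0 : ℂ) (n + ‖t₀‖ + 1) := by
    rw [mem_ball_zero_iff]
    linarith [norm_add_le t z]
  have h2 : t₀ + z ∈ Metric.ball (0 : ℂ) (n + ‖t₀‖ + 1) := by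
    rw [mem_ball_zero_iff]
    linarith [norm_add_le t₀ z]
  have e1 : z ∈ F.curry t ⁻¹' B ↔ z ∈ A :=
    ⟨fun hx => hz.1 hx.1, fun hx => ⟨hz.2 hx, h1⟩⟩
  have e2 : z ∈ F.curry t₀ ⁻¹' B ↔ z ∈ (fun z : ℂ => t₀ + z) ⁻¹' A :=
    ⟨fun hx => hx.1, fun hx => ⟨hx, h2⟩⟩
  change z ∈ symmDiff (F.curry t ⁻¹' B) (F.curry t₀ ⁻¹' B)
  rw [Set.mem_symmDiff] at hzs ⊢
  rw [e1, e2]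
  tauto

/-- Ergodicity of the translations by a dense set, in terms of functions. -/
lemma ae_const_of_dense_translation {S : Set ℂ} (hS : Dense S) {g : ℂ → ℂ} (hg : Measurable g)
    (h : ∀ t ∈ S, ∀ᵐ z : ℂ, g (z + t) = g z) : ∃ c : ℂ, ∀ᵐ z : ℂ, g z = c := by
  refine Filter.exists_eventuallyEq_const_of_forall_separating MeasurableSet fun U hU => ?_
  have hconst : Filter.EventuallyConst (g ⁻¹' U) (ae (volume : Measure ℂ)) := by
    refine aeconst_of_forall_preimage_vadd_ae_eq ℂ (hg hU).nullMeasurableSet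
      (preimage_add_ae_eq_of_dense hS (hg hU) fun t ht => ?_)
    refine Filter.Eventually.set_eq ?_
    filter_upwards [h t ht] with z hz
    simp only [Set.mem_preimage]
    rw [add_comm, hz]
  exact Filter.eventuallyConst_set.1 hconst

/-- If a measurable `f : ℂ → ℂ` satisfies `f(z+s) = f(z) + h(z)·s` for all `s` in a
dense additive subgroup, for a.e. `z`, then `f` is a.e. affine. -/
theorem stmt_9 (S : AddSubgroup ℂ) (hS : Dense (S : Set ℂ))
    (f : ℂ → ℂ) (hf : Measurable f) (h : ℂ → ℂ)
    (hrel : ∀ᵐ z : ℂ ∂volume, ∀ s ∈ S, f (z + s) = f z + h z * s) :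
    ∃ c h₀ : ℂ, ∀ᵐ z : ℂ ∂volume, f z = c + h₀ * z := by
  obtain ⟨s, hs0, hsS⟩ : ∃ s ∈ ({0}ᶜ : Set ℂ), s ∈ (S : Set ℂ) :=
    hS.exists_mem_open isOpen_compl_singleton ⟨1, by simp⟩ |>.imp fun _ hx => ⟨hx.2, hx.1⟩
  replace hs0 : s ≠ 0 := hs0
  -- `h` itself is not assumed measurable; this quotient is, and it agrees with `h` a.e.
  obtain ⟨h₀, hh₀⟩ := ae_const_of_dense_translation hS
    (g := fun z => (f (z + s) - f z) / s) (by fun_prop) fun t ht => by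
      filter_upwards [hrel] with z hz
      have e1 := hz t ht
      have e2 := hz (t + s) (S.add_mem ht hsS)
      have e3 := hz s hsS
      rw [← add_assoc] at e2
      rw [e1, e2, e3]
      ring
  obtain ⟨c, hc⟩ := ae_const_of_dense_translation hS
    (g := fun z => f z - h₀ * z) (by fun_prop) fun t ht => by
      filter_upwards [hrel, hh₀] with z hz hz'
      have e3 := hz s hsS
      have e4 : h z = h₀ := by
        rw [← hz', e3]
        field_simp
        ring
      rw [hz t ht, e4]
      ring
  refine ⟨c, h₀, ?_⟩
  filter_upwards [hc] with z hz
  rw [← hz]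
  ring
end
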